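/- For every s ∈ ℝ and b ∈ ℝ there exists C > 0 such that for every τ ∈ (0,1], every δ ∈ [-4,4], and every sequence (u_n)_{n∈ℤ} of functions in H^s(𝕋) with only finitely many nonzero terms, ‖(e^{inτδ} u_n)_{n∈ℤ}‖_{X^{s,b}_τ} ≤ C ‖(u_n)‖_{X^{s,b}_τ}, where e^{inτδ} u_n denotes multiplication of u_n by the unimodular scalar e^{inτδ}. -/

import Mathlib

noncomputable section

open MeasureTheory Complex Filter Topology AddCircle
open scoped ENNReal

abbrev Torus := AddCircle (2 * Real.pi)

instance : Fact (0 < 2 * Real.pi) := ⟨by positivity⟩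

/-- Japanese bracket `⟨x⟩ = (1+|x|²)^{1/2}`. -/
def jbr (x : ℝ) : ℝ := Real.sqrt (1 + x ^ 2)

/-- The Sobolev `H^s` norm on the torus, via Fourier coefficients. -/
def hsNorm (s : ℝ) (f : Torus → ℂ) : ℝ :=
  Real.sqrt (∑' k : ℤ, jbr k ^ (2 * s) * ‖fourierCoeff f k‖ ^ 2)

/-- Membership in `H^s(𝕋)` (as a function): square integrable with finite `H^s` norm. -/
def InHs (s : ℝ) (f : Torus → ℂ) : Prop :=
  MemLp f 2 haarAddCircle ∧ Summable fun k : ℤ => jbr k ^ (2 * s) * ‖fourierCoeff f k‖ ^ 2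

/-- The frequency cutoff `Π_τ`, keeping the Fourier modes `|k| ≤ τ^{-1/2}`. -/
def projC (τ : ℝ) (f : Torus → ℂ) : Torus → ℂ := fun x =>
  ∑' k : ℤ, if |(k : ℝ)| ≤ τ ^ (-(1 : ℝ) / 2) then fourierCoeff f k * fourier k x else 0

/-- The free Schrödinger group `e^{it∂_x²}`, given by the Fourier multiplier `e^{-itk²}`. -/
def schrod (t : ℝ) (f : Torus → ℂ) : Torus → ℂ := fun x =>
  ∑' k : ℤ, Complex.exp (-Complex.I * t * (k : ℂ) ^ 2) * fourierCoeff f k * fourier k x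

/-- Continuity on `I` with values in `L²(𝕋)`. -/
def ContL2On (I : Set ℝ) (u : ℝ → Torus → ℂ) : Prop :=
  (∀ t ∈ I, MemLp (u t) 2 haarAddCircle) ∧
  ∀ t ∈ I, Tendsto (fun t' => eLpNorm (u t' - u t) 2 haarAddCircle) (nhdsWithin t I) (nhds 0)

/-- Continuity on `I` with values in `H^s(𝕋)`. -/
def ContHsOn (s : ℝ) (I : Set ℝ) (u : ℝ → Torus → ℂ) : Prop :=
  (∀ t ∈ I, InHs s (u t)) ∧
  ∀ t ∈ I, Tendsto (fun t' => hsNorm s (u t' - u t)) (nhdsWithin t I) (nhds 0)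

/-- The cubic nonlinearity `|f|² f` (pointwise). -/
def cubic (f : Torus → ℂ) : Torus → ℂ := fun x => (‖f x‖ : ℂ) ^ 2 * f x

/-- The filtered cubic nonlinearity `Π_τ(|Π_τ f|² Π_τ f)`. -/
def projCubic (τ : ℝ) (f : Torus → ℂ) : Torus → ℂ := projC τ (cubic (projC τ f))

/-- `v` is the (global-in-time) mild solution of the projected equation
`i∂_t v = -∂_x² v - μ Π_τ(|Π_τ v|² Π_τ v)`, `v(0) = Π_τ u₀`. -/
def IsProjSolution (μ τ : ℝ) (u₀ : Torus → ℂ) (v : ℝ → Torus → ℂ) : Prop :=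
  ContL2On Set.univ v ∧
  ∀ t : ℝ, ∀ x : Torus,
    v t x = schrod t (projC τ u₀) x
      + Complex.I * μ * ∫ s in (0 : ℝ)..t, schrod (t - s) (projCubic τ (v s)) x

/-- The cubic NLS `i∂_t u = -∂_x² u - μ |u|² u` holds in the sense of space-time
distributions on `(0,T) × 𝕋` (tested against `ψ(t) e^{-ikx}`). -/
def DistribSolOn (μ T : ℝ) (u : ℝ → Torus → ℂ) : Prop :=
  ∀ k : ℤ, ∀ ψ : ℝ → ℂ, ContDiff ℝ (⊤ : ℕ∞) ψ → tsupport ψ ⊆ Set.Ioo 0 T →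
    -Complex.I * ∫ t : ℝ, deriv ψ t * fourierCoeff (u t) k
      = (k : ℂ) ^ 2 * ∫ t : ℝ, ψ t * fourierCoeff (u t) k
        - (μ : ℂ) * ∫ t : ℝ, ψ t * fourierCoeff (cubic (u t)) k

/-- `u ∈ L⁴((0,T) × 𝕋)`. -/
def SpaceTimeL4 (T : ℝ) (u : ℝ → Torus → ℂ) : Prop :=
  MemLp (fun p : ℝ × Torus => u p.1 p.2) 4
    ((volume.restrict (Set.Ioo 0 T)).prod haarAddCircle)

/-- Space-time Fourier transform `ṽ(σ,k)` of `v : ℝ × 𝕋 → ℂ`. -/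
def stFT (v : ℝ → Torus → ℂ) (σ : ℝ) (k : ℤ) : ℂ :=
  ∫ t : ℝ, Complex.exp (-Complex.I * σ * t) * fourierCoeff (v t) k

/-- The (continuous) Bourgain `X^{s,b}` norm, valued in `ℝ≥0∞`. -/
def XcNorm (s b : ℝ) (v : ℝ → Torus → ℂ) : ℝ≥0∞ :=
  (∫⁻ σ : ℝ, ∑' k : ℤ,
      ENNReal.ofReal ((1 + |(k : ℝ)|) ^ (2 * s) * (1 + |σ + (k : ℝ) ^ 2|) ^ (2 * b)
        * ‖stFT v σ k‖ ^ 2)) ^ (1 / 2 : ℝ)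

/-- The restriction norm `‖u‖_{X^{s,b}(T)}` is bounded by `M`: some extension of `u`
from `(0,T)` has `X^{s,b}` norm at most `M`. -/
def XresBounded (s b T : ℝ) (u : ℝ → Torus → ℂ) (M : ℝ≥0∞) : Prop :=
  ∃ v : ℝ → Torus → ℂ, (∀ t ∈ Set.Ioo 0 T, v t = u t) ∧ XcNorm s b v ≤ M

/-- `u` is a Bourgain-class solution of cubic NLS on `[0,T]` with datum `u₀`. -/
def IsNLSSolution (μ T : ℝ) (u₀ : Torus → ℂ) (u : ℝ → Torus → ℂ) : Prop :=
  ContL2On (Set.Icc 0 T) u ∧ SpaceTimeL4 T u ∧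
  (∃ b ∈ Set.Ioo (1 / 2 : ℝ) (5 / 8 : ℝ), ∃ v : ℝ → Torus → ℂ,
      (∀ t ∈ Set.Ioo 0 T, v t = u t) ∧ XcNorm 0 b v < ⊤) ∧
  u 0 = u₀ ∧ DistribSolOn μ T u

/-- One step of the pointwise nonlinear flow `e^{iμτ|Π_τ f|²} Π_τ f`. -/
def lieFlow (μ τ : ℝ) (f : Torus → ℂ) : Torus → ℂ := fun x =>
  Complex.exp (Complex.I * μ * τ * (‖projC τ f x‖ : ℂ) ^ 2) * projC τ f x

/-- The filtered Lie splitting scheme `u⁰ = Π_τ u₀`,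
`u^{n+1} = e^{iτ∂_x²} Π_τ (e^{iμτ|Π_τ uⁿ|²} Π_τ uⁿ)`. -/
def lieScheme (μ τ : ℝ) (u₀ : Torus → ℂ) : ℕ → Torus → ℂ
  | 0 => projC τ u₀
  | n + 1 => schrod τ (projC τ (lieFlow μ τ (lieScheme μ τ u₀ n)))

/-- `d_τ(σ) = (e^{iτσ}-1)/τ`. -/
def dtau (τ σ : ℝ) : ℂ := (Complex.exp (Complex.I * τ * σ) - 1) / τ

/-- The discrete Bourgain `X^{s,b}_τ` norm of a sequence of functions on the torus. -/
def XdNorm (τ s b : ℝ) (u : ℤ → Torus → ℂ) : ℝ :=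
  Real.sqrt (∫ σ in Set.Ioc (-(Real.pi / τ)) (Real.pi / τ),
    ∑' k : ℤ, jbr k ^ (2 * s) * jbr ‖dtau τ (σ - (k : ℝ) ^ 2)‖ ^ (2 * b) *
      ‖(τ : ℂ) * ∑' m : ℤ, fourierCoeff (u m) k * Complex.exp (Complex.I * m * τ * σ)‖ ^ 2)

/-- The discrete space-time Lebesgue norm `‖(u_n)‖_{ℓ^p_τ L^q}`. -/
def lpLqNorm (τ p q : ℝ) (u : ℤ → Torus → ℂ) : ℝ :=
  (τ * ∑' n : ℤ, (eLpNorm (u n) (ENNReal.ofReal q) haarAddCircle).toReal ^ p) ^ (1 / p)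

/-!
Modulating by `e^{inτδ}` translates the transform: `ũ(σ, k)` becomes `ũ(σ + δ, k)`. The function
`d_τ` is 1-Lipschitz uniformly in `τ`, so by Peetre's inequality translating the weight
`⟨d_τ(σ - k²)⟩^{2b}` by `δ` costs at most the factor `(√2 ⟨δ⟩)^{2|b|}`. The resulting integrand is
the translate by `δ` of the original one, which is `2π/τ`-periodic in `σ`, so the integral over the
period `(-π/τ, π/τ]` does not see the translation.
-/

section JapaneseBracket

lemma jbr_pos (x : ℝ) : 0 < jbr x := Real.sqrt_pos.mpr (by positivity)

lemma jbr_zero : jbr 0 = 1 := by simp [jbr]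

lemma continuous_jbr : Continuous jbr := by
  unfold jbr
  fun_prop

lemma jbr_le_jbr_of_abs_le_abs {x y : ℝ} (h : |x| ≤ |y|) : jbr x ≤ jbr y := by
  have hsq : x ^ 2 ≤ y ^ 2 := sq_le_sq.mpr h
  exact Real.sqrt_le_sqrt (by gcongr)

lemma jbr_add_le (x y : ℝ) : jbr (x + y) ≤ √2 * jbr x * jbr y := by
  unfold jbr
  rw [← Real.sqrt_mul zero_le_two, ← Real.sqrt_mul (by positivity)]
  apply Real.sqrt_le_sqrt
  nlinarith [sq_nonneg (x - y), sq_nonneg (x * y)]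

lemma jbr_le_of_abs_sub_le {x y r : ℝ} (h : |x - y| ≤ r) : jbr x ≤ √2 * jbr r * jbr y := by
  have hy := jbr_pos y
  calc
    jbr x = jbr ((x - y) + y) := by rw [sub_add_cancel]
    _ ≤ √2 * jbr (x - y) * jbr y := jbr_add_le _ _
    _ ≤ √2 * jbr r * jbr y := by
      gcongr
      exact jbr_le_jbr_of_abs_le_abs (h.trans (le_abs_self r))

lemma rpow_le_rpow_abs_mul_rpow {x y c : ℝ} (hx : 0 < x) (hy : 0 < y) (hc : 0 ≤ c)
    (hxy : x ≤ c * y) (hyx : y ≤ c * x) (p : ℝ) : x ^ p ≤ c ^ |p| * y ^ p := by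
  rcases le_total 0 p with hp | hp
  · rw [abs_of_nonneg hp, ← Real.mul_rpow hc hy.le]
    exact Real.rpow_le_rpow hx.le hxy hp
  · have hinv : x⁻¹ ≤ c * y⁻¹ := by
      rw [← div_eq_mul_inv, le_div_iff₀ hy, inv_mul_le_iff₀ hx, mul_comm x c]
      exact hyx
    calc
      x ^ p = x⁻¹ ^ (-p) := by rw [Real.inv_rpow hx.le, Real.rpow_neg hx.le, inv_inv]
      _ ≤ (c * y⁻¹) ^ (-p) := by gcongr; linarith
      _ = c ^ |p| * y ^ p := by
        rw [Real.mul_rpow hc (inv_nonneg.mpr hy.le), Real.inv_rpow hy.le, Real.rpow_neg hy.le,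
          inv_inv, abs_of_nonpos hp]

lemma jbr_rpow_le_of_abs_sub_le {x y r : ℝ} (h : |x - y| ≤ r) (p : ℝ) :
    jbr x ^ p ≤ (√2 * jbr r) ^ |p| * jbr y ^ p :=
  rpow_le_rpow_abs_mul_rpow (jbr_pos x) (jbr_pos y)
    (mul_nonneg (Real.sqrt_nonneg 2) (jbr_pos r).le) (jbr_le_of_abs_sub_le h)
    (jbr_le_of_abs_sub_le (abs_sub_comm x y ▸ h)) p

end JapaneseBracket

section DifferenceSymbol

lemma norm_dtau_sub_dtau_le (τ x y : ℝ) : ‖dtau τ x - dtau τ y‖ ≤ |x - y| := by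
  have hfactor : dtau τ x - dtau τ y =
      exp (I * (τ * y : ℝ)) * (exp (I * (τ * (x - y) : ℝ)) - 1) / τ := by
    rw [dtau, dtau, ← sub_div, sub_sub_sub_cancel_right, mul_sub, ← Complex.exp_add, mul_one]
    congr 3 <;> push_cast <;> ring
  rw [hfactor, norm_div, norm_mul, norm_exp_I_mul_ofReal, one_mul, norm_real]
  refine div_le_of_le_mul₀ (norm_nonneg τ) (abs_nonneg _) ?_
  calc
    ‖exp (I * (τ * (x - y) : ℝ)) - 1‖ ≤ ‖τ * (x - y)‖ := Real.norm_exp_I_mul_ofReal_sub_one_le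
    _ = |x - y| * ‖τ‖ := by rw [norm_mul, Real.norm_eq_abs (x - y), mul_comm]

lemma norm_dtau_le (τ x : ℝ) : ‖dtau τ x‖ ≤ 2 / |τ| := by
  have hexp : ‖exp (I * τ * x) - 1‖ ≤ 2 := by
    have hnorm : ‖exp (I * τ * x)‖ = 1 := by
      rw [mul_assoc, ← ofReal_mul, norm_exp_I_mul_ofReal]
    calc
      ‖exp (I * τ * x) - 1‖ ≤ ‖exp (I * τ * x)‖ + ‖(1 : ℂ)‖ := norm_sub_le _ _
      _ = 2 := by rw [hnorm, norm_one, one_add_one_eq_two]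
  rw [dtau, norm_div, norm_real, Real.norm_eq_abs]
  gcongr

lemma continuous_dtau (τ : ℝ) : Continuous (dtau τ) := by
  unfold dtau
  fun_prop

lemma dtau_periodic {τ : ℝ} (hτ : τ ≠ 0) : Function.Periodic (dtau τ) (2 * Real.pi / τ) := by
  intro σ
  have hτ' : (τ : ℂ) ≠ 0 := ofReal_ne_zero.mpr hτ
  have hexp : exp (I * τ * (σ + 2 * Real.pi / τ : ℝ)) = exp (I * τ * σ) := by
    rw [Complex.exp_eq_exp_iff_exists_int]
    refine ⟨1, ?_⟩
    push_cast
    field_simp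
  rw [dtau, dtau, hexp]

lemma jbr_norm_dtau_rpow_le {x y r : ℝ} (h : |x - y| ≤ r) (τ p : ℝ) :
    jbr ‖dtau τ x‖ ^ p ≤ (√2 * jbr r) ^ |p| * jbr ‖dtau τ y‖ ^ p :=
  jbr_rpow_le_of_abs_sub_le
    ((abs_norm_sub_norm_le _ _).trans ((norm_dtau_sub_dtau_le τ x y).trans h)) p

lemma jbr_norm_dtau_rpow_le_const (τ p x : ℝ) :
    jbr ‖dtau τ x‖ ^ p ≤ (√2 * jbr (2 / |τ|)) ^ |p| := by
  have hdist : |‖dtau τ x‖ - 0| ≤ 2 / |τ| := by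
    rw [sub_zero, abs_norm]
    exact norm_dtau_le τ x
  simpa only [jbr_zero, Real.one_rpow, mul_one] using jbr_rpow_le_of_abs_sub_le hdist p

end DifferenceSymbol

section Transform

/-- The space-time Fourier transform `ũ(σ, k) = τ ∑ₘ ûₘ(k) e^{imτσ}` of a sequence of functions
sampled with time step `τ`. -/
def discreteFT (τ : ℝ) (u : ℤ → Torus → ℂ) (σ : ℝ) (k : ℤ) : ℂ :=
  τ * ∑' m : ℤ, fourierCoeff (u m) k * exp (I * m * τ * σ)

/-- The sequence `(e^{inτδ} uₙ)ₙ`, i.e. `u` modulated in time by the frequency `δ`. -/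
def modulate (τ δ : ℝ) (u : ℤ → Torus → ℂ) : ℤ → Torus → ℂ :=
  fun n x => exp (I * n * τ * δ) * u n x

variable {τ : ℝ} {u : ℤ → Torus → ℂ}

lemma norm_exp_I_mul_int_mul (m : ℤ) (τ σ : ℝ) : ‖exp (I * m * τ * σ)‖ = 1 := by
  have hreal : I * m * τ * σ = I * (m * τ * σ : ℝ) := by push_cast; ring
  rw [hreal, norm_exp_I_mul_ofReal]

lemma discreteFT_modulate (τ δ : ℝ) (u : ℤ → Torus → ℂ) (σ : ℝ) (k : ℤ) :
    discreteFT τ (modulate τ δ u) σ k = discreteFT τ u (σ + δ) k := by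
  have hterm (m : ℤ) : fourierCoeff (modulate τ δ u m) k * exp (I * m * τ * σ) =
      fourierCoeff (u m) k * exp (I * m * τ * (σ + δ : ℝ)) := by
    unfold modulate
    rw [fourierCoeff.const_mul, mul_comm (exp _) (fourierCoeff (u m) k), mul_assoc,
      ← Complex.exp_add]
    congr 2
    push_cast
    ring
  simp_rw [discreteFT, hterm]

lemma discreteFT_periodic (hτ : τ ≠ 0) (u : ℤ → Torus → ℂ) (k : ℤ) :
    Function.Periodic (discreteFT τ u · k) (2 * Real.pi / τ) := by
  intro σ
  have hτ' : (τ : ℂ) ≠ 0 := ofReal_ne_zero.mpr hτ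
  have hexp (m : ℤ) :
      exp (I * m * τ * (σ + 2 * Real.pi / τ : ℝ)) = exp (I * m * τ * σ) := by
    rw [Complex.exp_eq_exp_iff_exists_int]
    refine ⟨m, ?_⟩
    push_cast
    field_simp
  simp_rw [discreteFT, hexp]

lemma norm_discreteFT_le {k : ℤ} (hu : Summable fun n => ‖fourierCoeff (u n) k‖) (τ σ : ℝ) :
    ‖discreteFT τ u σ k‖ ≤ |τ| * ∑' n, ‖fourierCoeff (u n) k‖ := by
  rw [discreteFT, norm_mul, norm_real, Real.norm_eq_abs]
  gcongr
  refine tsum_of_norm_bounded hu.hasSum fun m => ?_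
  rw [norm_mul, norm_exp_I_mul_int_mul, mul_one]

lemma continuous_discreteFT {k : ℤ} (hu : Summable fun n => ‖fourierCoeff (u n) k‖) (τ : ℝ) :
    Continuous (discreteFT τ u · k) := by
  refine continuous_const.mul (continuous_tsum (fun m => by fun_prop) hu fun m σ => ?_)
  rw [norm_mul, norm_exp_I_mul_int_mul, mul_one]

end Transform

section Density

/-- The contribution of the frequency `(σ, k)` to the square of the `X^{s,b}_τ` norm. -/
def XdDensity (τ s b : ℝ) (u : ℤ → Torus → ℂ) (k : ℤ) (σ : ℝ) : ℝ :=
  jbr k ^ (2 * s) * jbr ‖dtau τ (σ - (k : ℝ) ^ 2)‖ ^ (2 * b) * ‖discreteFT τ u σ k‖ ^ 2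

/-- The sequence `u` satisfies `∑ₖ ⟨k⟩^{2s} (∑ₙ |ûₙ(k)|)² < ∞`. For such sequences the series in the
`X^{s,b}_τ` norm converge and the norm is finite. The inner convergence is a separate condition
because a divergent `∑ₙ |ûₙ(k)|` has the value `0` as a `tsum`. -/
structure SummableHs (s : ℝ) (u : ℤ → Torus → ℂ) : Prop where
  summable_time (k : ℤ) : Summable fun n => ‖fourierCoeff (u n) k‖
  summable_freq : Summable fun k : ℤ => jbr k ^ (2 * s) * (∑' n, ‖fourierCoeff (u n) k‖) ^ 2

variable {τ s : ℝ} {u : ℤ → Torus → ℂ}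

lemma summableHs_of_finite (hu : ∀ n, Summable fun k : ℤ =>
    jbr k ^ (2 * s) * ‖fourierCoeff (u n) k‖ ^ 2) (hfin : {n | u n ≠ 0}.Finite) :
    SummableHs s u := by
  have hzero (k : ℤ) : ∀ n ∉ hfin.toFinset, ‖fourierCoeff (u n) k‖ = 0 := by
    intro n hn
    have hun : u n = 0 := by simpa using hn
    simp [hun, fourierCoeff]
  refine ⟨fun k => summable_of_ne_finset_zero (hzero k), ?_⟩
  refine Summable.of_nonneg_of_le (fun k => ?_) (fun k => ?_)
    ((summable_sum fun n (_ : n ∈ hfin.toFinset) => hu n).mul_left (hfin.toFinset.card : ℝ))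
  · exact mul_nonneg (Real.rpow_nonneg (jbr_pos k).le _) (sq_nonneg _)
  · have hk := (jbr_pos k).le
    calc
      jbr k ^ (2 * s) * (∑' n, ‖fourierCoeff (u n) k‖) ^ 2
          = jbr k ^ (2 * s) * (∑ n ∈ hfin.toFinset, ‖fourierCoeff (u n) k‖) ^ 2 := by
        rw [tsum_eq_sum (hzero k)]
      _ ≤ jbr k ^ (2 * s) *
          (hfin.toFinset.card * ∑ n ∈ hfin.toFinset, ‖fourierCoeff (u n) k‖ ^ 2) := by
        gcongr
        exact sq_sum_le_card_mul_sum_sq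
      _ = hfin.toFinset.card *
          ∑ n ∈ hfin.toFinset, jbr k ^ (2 * s) * ‖fourierCoeff (u n) k‖ ^ 2 := by
        rw [← Finset.mul_sum, mul_left_comm]

lemma XdDensity_nonneg (τ s b : ℝ) (u : ℤ → Torus → ℂ) (k : ℤ) (σ : ℝ) :
    0 ≤ XdDensity τ s b u k σ := by
  have hk := jbr_pos k
  have hd := jbr_pos ‖dtau τ (σ - (k : ℝ) ^ 2)‖
  unfold XdDensity
  positivity

lemma XdDensity_modulate_le {δ R : ℝ} (hδ : |δ| ≤ R) (τ s b : ℝ) (u : ℤ → Torus → ℂ) (k : ℤ)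
    (σ : ℝ) : XdDensity τ s b (modulate τ δ u) k σ ≤
      (√2 * jbr R) ^ |2 * b| * XdDensity τ s b u k (σ + δ) := by
  have hk := jbr_pos k
  have hdist : |σ - (k : ℝ) ^ 2 - (σ + δ - (k : ℝ) ^ 2)| ≤ R := by
    rwa [sub_sub_sub_cancel_right, sub_add_cancel_left, abs_neg]
  calc
    XdDensity τ s b (modulate τ δ u) k σ
        = jbr k ^ (2 * s) * jbr ‖dtau τ (σ - (k : ℝ) ^ 2)‖ ^ (2 * b) *
          ‖discreteFT τ u (σ + δ) k‖ ^ 2 := by rw [XdDensity, discreteFT_modulate]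
    _ ≤ jbr k ^ (2 * s) *
          ((√2 * jbr R) ^ |2 * b| * jbr ‖dtau τ (σ + δ - (k : ℝ) ^ 2)‖ ^ (2 * b)) *
          ‖discreteFT τ u (σ + δ) k‖ ^ 2 := by
      gcongr
      exact jbr_norm_dtau_rpow_le hdist τ (2 * b)
    _ = (√2 * jbr R) ^ |2 * b| * XdDensity τ s b u k (σ + δ) := by
      rw [XdDensity]
      ring

lemma XdDensity_periodic (hτ : τ ≠ 0) (s b : ℝ) (u : ℤ → Torus → ℂ) (k : ℤ) :
    Function.Periodic (XdDensity τ s b u k) (2 * Real.pi / τ) := by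
  intro σ
  have hft : discreteFT τ u (σ + 2 * Real.pi / τ) k = discreteFT τ u σ k :=
    discreteFT_periodic hτ u k σ
  rw [XdDensity, XdDensity, hft, add_sub_right_comm, dtau_periodic hτ]

lemma continuous_XdDensity {k : ℤ} (hu : Summable fun n => ‖fourierCoeff (u n) k‖)
    (τ s b : ℝ) : Continuous (XdDensity τ s b u k) := by
  have hweight : Continuous fun σ : ℝ => jbr ‖dtau τ (σ - (k : ℝ) ^ 2)‖ :=
    continuous_jbr.comp ((continuous_dtau τ).comp (continuous_sub_right _)).norm
  exact (continuous_const.mul (hweight.rpow_const fun _ => .inl (jbr_pos _).ne')).mul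
    ((continuous_discreteFT hu τ).norm.pow 2)

lemma XdDensity_le {k : ℤ} (hu : Summable fun n => ‖fourierCoeff (u n) k‖) (τ s b σ : ℝ) :
    XdDensity τ s b u k σ ≤ (√2 * jbr (2 / |τ|)) ^ |2 * b| * |τ| ^ 2 *
      (jbr k ^ (2 * s) * (∑' n, ‖fourierCoeff (u n) k‖) ^ 2) := by
  have hk := jbr_pos k
  have hτ := jbr_pos (2 / |τ|)
  calc
    XdDensity τ s b u k σ
        ≤ jbr k ^ (2 * s) * (√2 * jbr (2 / |τ|)) ^ |2 * b| *
          (|τ| * ∑' n, ‖fourierCoeff (u n) k‖) ^ 2 := by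
      unfold XdDensity
      gcongr
      · exact jbr_norm_dtau_rpow_le_const τ (2 * b) _
      · exact norm_discreteFT_le hu τ σ
    _ = (√2 * jbr (2 / |τ|)) ^ |2 * b| * |τ| ^ 2 *
        (jbr k ^ (2 * s) * (∑' n, ‖fourierCoeff (u n) k‖) ^ 2) := by ring

namespace SummableHs

lemma summable_XdDensity (hu : SummableHs s u) (τ b σ : ℝ) :
    Summable fun k => XdDensity τ s b u k σ :=
  .of_nonneg_of_le (fun k => XdDensity_nonneg τ s b u k σ)
    (fun k => XdDensity_le (hu.summable_time k) τ s b σ) (hu.summable_freq.mul_left _)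

lemma continuous_tsum_XdDensity (hu : SummableHs s u) (τ b : ℝ) :
    Continuous fun σ => ∑' k, XdDensity τ s b u k σ :=
  continuous_tsum (fun k => continuous_XdDensity (hu.summable_time k) τ s b)
    (hu.summable_freq.mul_left _) fun k σ =>
      (Real.norm_of_nonneg (XdDensity_nonneg τ s b u k σ)).trans_le
        (XdDensity_le (hu.summable_time k) τ s b σ)

lemma tsum_XdDensity_modulate_le (hu : SummableHs s u) {δ R : ℝ} (hδ : |δ| ≤ R) (τ b σ : ℝ) :
    ∑' k, XdDensity τ s b (modulate τ δ u) k σ ≤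
      (√2 * jbr R) ^ |2 * b| * ∑' k, XdDensity τ s b u k (σ + δ) := by
  have hle (k : ℤ) := XdDensity_modulate_le hδ τ s b u k σ
  have hsum := (hu.summable_XdDensity τ b (σ + δ)).mul_left ((√2 * jbr R) ^ |2 * b|)
  rw [← tsum_mul_left]
  exact (hsum.of_nonneg_of_le (fun k => XdDensity_nonneg τ s b _ k σ) hle).tsum_le_tsum hle hsum

end SummableHs

end Density

section Modulation

lemma setIntegral_Ioc_comp_add_right_of_periodic {E : Type*} [NormedAddCommGroup E]
    [NormedSpace ℝ E] {f : ℝ → E} {a b : ℝ} (hf : Function.Periodic f (b - a)) (hab : a ≤ b)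
    (δ : ℝ) : ∫ x in Set.Ioc a b, f (x + δ) = ∫ x in Set.Ioc a b, f x := by
  rw [← intervalIntegral.integral_of_le hab, ← intervalIntegral.integral_of_le hab,
    intervalIntegral.integral_comp_add_right]
  convert hf.intervalIntegral_add_eq (a + δ) a using 2 <;> ring

lemma XdNorm_eq_sqrt_integral_XdDensity (τ s b : ℝ) (u : ℤ → Torus → ℂ) :
    XdNorm τ s b u =
      √(∫ σ in Set.Ioc (-(Real.pi / τ)) (Real.pi / τ), ∑' k, XdDensity τ s b u k σ) :=
  rfl

lemma setIntegral_tsum_XdDensity_comp_add_right {τ : ℝ} (hτ : 0 < τ) (s b δ : ℝ)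
    (u : ℤ → Torus → ℂ) :
    ∫ σ in Set.Ioc (-(Real.pi / τ)) (Real.pi / τ), ∑' k, XdDensity τ s b u k (σ + δ) =
      ∫ σ in Set.Ioc (-(Real.pi / τ)) (Real.pi / τ), ∑' k, XdDensity τ s b u k σ := by
  have hperiod : Function.Periodic (fun σ => ∑' k, XdDensity τ s b u k σ)
      (Real.pi / τ - -(Real.pi / τ)) := by
    rw [show Real.pi / τ - -(Real.pi / τ) = 2 * Real.pi / τ by ring]
    exact fun σ => tsum_congr fun k => XdDensity_periodic hτ.ne' s b u k σ
  exact setIntegral_Ioc_comp_add_right_of_periodic hperiod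
    (neg_le_self (div_pos Real.pi_pos hτ).le) δ

theorem discrete_bourgain_modulation_general {τ s δ R : ℝ} {u : ℤ → Torus → ℂ} (hτ : 0 < τ)
    (b : ℝ) (hδ : |δ| ≤ R) (hu : SummableHs s u) :
    XdNorm τ s b (modulate τ δ u) ≤ (√2 * jbr R) ^ |b| * XdNorm τ s b u := by
  have hconst : 0 ≤ √2 * jbr R := mul_nonneg (Real.sqrt_nonneg 2) (jbr_pos R).le
  have hsq : (√2 * jbr R) ^ |2 * b| = ((√2 * jbr R) ^ |b|) ^ 2 := by
    rw [abs_mul, abs_two, mul_comm 2, Real.rpow_mul hconst, Real.rpow_two]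
  have hcont : Continuous fun σ => (√2 * jbr R) ^ |2 * b| * ∑' k, XdDensity τ s b u k (σ + δ) :=
    continuous_const.mul ((hu.continuous_tsum_XdDensity τ b).comp (continuous_add_const δ))
  rw [XdNorm_eq_sqrt_integral_XdDensity, XdNorm_eq_sqrt_integral_XdDensity,
    ← Real.sqrt_sq (Real.rpow_nonneg hconst |b|), ← Real.sqrt_mul (sq_nonneg _), ← hsq,
    ← setIntegral_tsum_XdDensity_comp_add_right hτ s b δ u, ← integral_const_mul]
  exact Real.sqrt_le_sqrt <| integral_mono_of_nonneg
    (.of_forall fun σ => tsum_nonneg fun k => XdDensity_nonneg τ s b _ k σ)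
    (hcont.integrableOn_Icc.mono_set Set.Ioc_subset_Icc_self)
    (.of_forall fun σ => hu.tsum_XdDensity_modulate_le hδ τ b σ)

end Modulation

/-- Uniform boundedness of modulation by `e^{inτδ}`, `δ ∈ [-4,4]`,
on the discrete Bourgain spaces. -/
theorem discrete_bourgain_modulation (s b : ℝ) :
    ∃ C > (0 : ℝ), ∀ τ ∈ Set.Ioc (0 : ℝ) 1, ∀ δ ∈ Set.Icc (-4 : ℝ) 4,
      ∀ u : ℤ → Torus → ℂ, (∀ n, InHs s (u n)) → {n : ℤ | u n ≠ 0}.Finite →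
      XdNorm τ s b (fun n x => Complex.exp (Complex.I * (n : ℂ) * (τ : ℂ) * (δ : ℂ)) * u n x)
        ≤ C * XdNorm τ s b u := by
  have hC : 0 < √2 * jbr 4 := mul_pos (Real.sqrt_pos.mpr two_pos) (jbr_pos 4)
  exact ⟨(√2 * jbr 4) ^ |b|, Real.rpow_pos_of_pos hC _, fun τ hτ δ hδ u hu hfin =>
    discrete_bourgain_modulation_general hτ.1 b (abs_le.mpr hδ)
      (summableHs_of_finite (fun n => (hu n).2) hfin)⟩
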